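/- Let n ≥ 2, let q be a nonzero real polynomial in n variables, let p := 1 + (s − 1)·q, and let D be the Newton diagram of q. If α ∈ ℤⁿ is a sink of D, then the coefficient of x^α in p − 1 is strictly positive; if α is a source of D, then the coefficient of x^α in p − 1 is strictly negative. Consequently #(D) ≤ N(p − 1), and hence #(D) − 1 ≤ N(p). -/

import Mathlib

/-!
Extend the coefficients of `q` by zero to `ℤⁿ`. At a point `α` of the positive quadrant the
coefficient of `x^α` in `p - 1 = (s - 1) q` is `∑ₖ c_{down_k α} - c_α` (`coeff_sub_one_mul`).
At a sink all terms `c_{down_k α}` and `-c_α` are nonnegative and one of them is nonzero, so the sum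
is positive; at a source all signs are reversed. A node has a neighbour (or itself) in the support
of `q`, so it lies in the positive quadrant (`IsNode.nonneg`); hence nodes inject into the support
of `p - 1`. Finally, `p` and `p - 1` differ only in the constant term.
-/

open MvPolynomial

/-- `N(p)`: the number of monomials of `p` with nonzero coefficient. -/
def Nmon {n : ℕ} (p : MvPolynomial (Fin n) ℝ) : ℕ := p.support.card

/-- `s = x₁ + ⋯ + xₙ`. -/
noncomputable def sPoly (n : ℕ) : MvPolynomial (Fin n) ℝ := ∑ i, X i

/-- `down_k`: subtract `1` from the `k`-th entry. -/
def downk {n : ℕ} (k : Fin n) (α : Fin n → ℤ) : Fin n → ℤ :=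
  Function.update α k (α k - 1)

/-- A sink of a diagram `D : ℤⁿ → {P,0,N}`. -/
def IsSink {n : ℕ} (D : (Fin n → ℤ) → SignType) (α : Fin n → ℤ) : Prop :=
  D α ≤ 0 ∧ (∀ k, 0 ≤ D (downk k α)) ∧ (D α ≠ 0 ∨ ∃ k, D (downk k α) ≠ 0)

/-- A source of a diagram `D : ℤⁿ → {P,0,N}`. -/
def IsSource {n : ℕ} (D : (Fin n → ℤ) → SignType) (α : Fin n → ℤ) : Prop :=
  0 ≤ D α ∧ (∀ k, D (downk k α) ≤ 0) ∧ (D α ≠ 0 ∨ ∃ k, D (downk k α) ≠ 0)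

/-- A node: a sink or a source. -/
def IsNode {n : ℕ} (D : (Fin n → ℤ) → SignType) (α : Fin n → ℤ) : Prop :=
  IsSink D α ∨ IsSource D α

/-- `#(D)`: the number of nodes of `D`. -/
noncomputable def nodeCount {n : ℕ} (D : (Fin n → ℤ) → SignType) : ℕ :=
  Set.ncard {α | IsNode D α}

/-- The coefficient of `q` at a point of `ℤⁿ` (zero off the positive quadrant). -/
noncomputable def coeffZ {n : ℕ} (q : MvPolynomial (Fin n) ℝ)
    (α : Fin n → ℤ) : ℝ :=
  if ∀ i, 0 ≤ α i then
    q.coeff (Finsupp.equivFunOnFinite.symm fun i => (α i).toNat)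
  else 0

/-- The Newton diagram of `q`. -/
noncomputable def newton {n : ℕ} (q : MvPolynomial (Fin n) ℝ) :
    (Fin n → ℤ) → SignType :=
  fun α => SignType.sign (coeffZ q α)

/-- The point of `ℤⁿ` as an exponent vector; negative entries are truncated to `0`. -/
noncomputable def toExp {n : ℕ} (α : Fin n → ℤ) : Fin n →₀ ℕ :=
  Finsupp.equivFunOnFinite.symm fun i => (α i).toNat

lemma toExp_apply {n : ℕ} (α : Fin n → ℤ) (i : Fin n) : toExp α i = (α i).toNat := rfl

lemma coeffZ_of_nonneg {n : ℕ} (q : MvPolynomial (Fin n) ℝ) {α : Fin n → ℤ} (h : ∀ i, 0 ≤ α i) :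
    coeffZ q α = q.coeff (toExp α) := if_pos h

lemma nonneg_of_coeffZ_ne_zero {n : ℕ} {q : MvPolynomial (Fin n) ℝ} {α : Fin n → ℤ}
    (h : coeffZ q α ≠ 0) : ∀ i, 0 ≤ α i := by
  by_contra hn
  exact h (if_neg hn)

lemma downk_le {n : ℕ} (k : Fin n) (α : Fin n → ℤ) (i : Fin n) : downk k α i ≤ α i := by
  by_cases h : i = k
  · subst h
    simp [downk]
  · simp [downk, h]

/-- Multiplication by `x_k` shifts the diagram of `q`, also on the boundary of the quadrant, where
`coeffZ` is zero by convention. -/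
lemma coeff_X_mul_eq_coeffZ {n : ℕ} (q : MvPolynomial (Fin n) ℝ) {α : Fin n → ℤ}
    (h : ∀ i, 0 ≤ α i) (k : Fin n) :
    (X k * q).coeff (toExp α) = coeffZ q (downk k α) := by
  rw [coeff_X_mul']
  by_cases hk : 1 ≤ α k
  · have hd : ∀ i, 0 ≤ downk k α i := by
      intro i
      by_cases hi : i = k
      · subst hi
        simpa [downk] using hk
      · simpa [downk, hi] using h i
    rw [coeffZ_of_nonneg q hd, if_pos]
    · congr 1
      ext i
      by_cases hi : i = k
      · subst hi
        simp [toExp_apply, downk]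
      · simp [toExp_apply, downk, hi]
    · rw [Finsupp.mem_support_iff, toExp_apply]
      omega
  -- Here `α k = 0`: both sides vanish, since `downk k α` leaves the positive quadrant.
  · rw [if_neg]
    · by_contra hne
      have := nonneg_of_coeffZ_ne_zero (Ne.symm hne) k
      simp [downk] at this
      omega
    · rw [Finsupp.mem_support_iff, toExp_apply]
      omega

lemma coeff_sub_one_mul {n : ℕ} (q : MvPolynomial (Fin n) ℝ) {α : Fin n → ℤ}
    (h : ∀ i, 0 ≤ α i) :
    ((sPoly n - 1) * q).coeff (toExp α) = ∑ k, coeffZ q (downk k α) - coeffZ q α := by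
  rw [sub_mul, one_mul, coeff_sub, sPoly, Finset.sum_mul, coeff_sum, coeffZ_of_nonneg q h]
  simp only [coeff_X_mul_eq_coeffZ q h]

/-- The nondegeneracy clause common to sinks and sources confines them to the positive quadrant,
where `toExp` loses no information. -/
lemma nonneg_of_newton_ne_zero {n : ℕ} {q : MvPolynomial (Fin n) ℝ} {α : Fin n → ℤ}
    (h : newton q α ≠ 0 ∨ ∃ k, newton q (downk k α) ≠ 0) : ∀ i, 0 ≤ α i := by
  simp only [newton, ne_eq, sign_eq_zero_iff] at h
  rcases h with h | ⟨k, h⟩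
  · exact nonneg_of_coeffZ_ne_zero h
  · exact fun i => (nonneg_of_coeffZ_ne_zero h i).trans (downk_le k α i)

lemma IsNode.nonneg {n : ℕ} {q : MvPolynomial (Fin n) ℝ} {α : Fin n → ℤ}
    (h : IsNode (newton q) α) : ∀ i, 0 ≤ α i :=
  nonneg_of_newton_ne_zero (h.elim (fun h => h.2.2) (fun h => h.2.2))

lemma coeff_pos_of_isSink {n : ℕ} {q : MvPolynomial (Fin n) ℝ} {α : Fin n → ℤ}
    (h : IsSink (newton q) α) : 0 < ((sPoly n - 1) * q).coeff (toExp α) := by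
  rw [coeff_sub_one_mul q (nonneg_of_newton_ne_zero h.2.2)]
  obtain ⟨h1, h2, h3⟩ := h
  simp only [newton, ne_eq, sign_eq_zero_iff, sign_nonneg_iff, sign_nonpos_iff] at h1 h2 h3
  have hs : 0 ≤ ∑ k, coeffZ q (downk k α) := Finset.sum_nonneg fun k _ => h2 k
  rcases h3 with h3 | ⟨k, hk⟩
  · linarith [lt_of_le_of_ne h1 h3]
  · have : 0 < ∑ k, coeffZ q (downk k α) :=
      Finset.sum_pos' (fun k _ => h2 k)
        ⟨k, Finset.mem_univ k, lt_of_le_of_ne (h2 k) (Ne.symm hk)⟩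
    linarith

lemma coeff_neg_of_isSource {n : ℕ} {q : MvPolynomial (Fin n) ℝ} {α : Fin n → ℤ}
    (h : IsSource (newton q) α) : ((sPoly n - 1) * q).coeff (toExp α) < 0 := by
  rw [coeff_sub_one_mul q (nonneg_of_newton_ne_zero h.2.2)]
  obtain ⟨h1, h2, h3⟩ := h
  simp only [newton, ne_eq, sign_eq_zero_iff, sign_nonneg_iff, sign_nonpos_iff] at h1 h2 h3
  have hs : ∑ k, coeffZ q (downk k α) ≤ 0 := Finset.sum_nonpos fun k _ => h2 k
  rcases h3 with h3 | ⟨k, hk⟩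
  · linarith [lt_of_le_of_ne h1 (Ne.symm h3)]
  · have : ∑ k, coeffZ q (downk k α) < 0 :=
      Finset.sum_neg' (fun k _ => h2 k)
        ⟨k, Finset.mem_univ k, lt_of_le_of_ne (h2 k) hk⟩
    linarith

lemma nodeCount_le {n : ℕ} (q : MvPolynomial (Fin n) ℝ) :
    nodeCount (newton q) ≤ Nmon ((sPoly n - 1) * q) := by
  rw [nodeCount, Nmon, ← Set.ncard_coe_finset]
  refine Set.ncard_le_ncard_of_injOn toExp ?_ ?_ (Finset.finite_toSet _)
  · intro α hα
    rw [SetLike.mem_coe, mem_support_iff]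
    exact hα.elim (fun h => (coeff_pos_of_isSink h).ne') (fun h => (coeff_neg_of_isSource h).ne)
  · intro α hα β hβ hab
    funext i
    have hi := DFunLike.congr_fun hab i
    rw [toExp_apply, toExp_apply] at hi
    have ha := IsNode.nonneg hα i
    have hb := IsNode.nonneg hβ i
    omega

lemma Nmon_sub_one_le {n : ℕ} (p : MvPolynomial (Fin n) ℝ) : Nmon (p - 1) ≤ Nmon p + 1 := by
  have hsub : (p - 1).support ⊆ insert 0 p.support := by
    intro m hm
    rw [mem_support_iff, coeff_sub, coeff_one] at hm
    rw [Finset.mem_insert, mem_support_iff]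
    by_contra! hc
    rw [hc.2, if_neg (Ne.symm hc.1)] at hm
    simp at hm
  exact (Finset.card_le_card hsub).trans (Finset.card_insert_le _ _)

/-- if `p = 1 + (s−1)·q` and `D` is the Newton diagram of `q`,
then at a sink (resp. source) of `D` the coefficient of `p − 1` is positive
(resp. negative); consequently `#(D) ≤ N(p−1)` and `#(D) − 1 ≤ N(p)`. -/
theorem stmt9 (n : ℕ) (hn : 2 ≤ n) (q : MvPolynomial (Fin n) ℝ) (hq : q ≠ 0)
    (p : MvPolynomial (Fin n) ℝ) (hp : p = 1 + (sPoly n - 1) * q) :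
    (∀ α : Fin n → ℤ, IsSink (newton q) α →
      0 < (p - 1).coeff (Finsupp.equivFunOnFinite.symm fun i => (α i).toNat)) ∧
    (∀ α : Fin n → ℤ, IsSource (newton q) α →
      (p - 1).coeff (Finsupp.equivFunOnFinite.symm fun i => (α i).toNat) < 0) ∧
    nodeCount (newton q) ≤ Nmon (p - 1) ∧
    nodeCount (newton q) ≤ Nmon p + 1 := by
  have hp1 : p - 1 = (sPoly n - 1) * q := by rw [hp]; ring
  have hcount : nodeCount (newton q) ≤ Nmon (p - 1) := hp1 ▸ nodeCount_le q
  refine ⟨fun α h => ?_, fun α h => ?_, hcount, hcount.trans (Nmon_sub_one_le p)⟩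
  · rw [hp1]
    exact coeff_pos_of_isSink h
  · rw [hp1]
    exact coeff_neg_of_isSource h
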